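/- Every standard term order on the free monoid X_n* on the finite alphabet {x_1,…,x_n} can be extended to a standard term order on the free monoid X* on the full countable alphabet; consequently, the partial order 𝔑_n (the intersection of all standard term orders on X_n*) is exactly the restriction to X_n* of the partial order 𝔑 (the intersection of all standard term orders on X*). -/

import Mathlib

/-- A standard term order on the free monoid `X*` on the countable alphabet
`X = {x₁, x₂, …}`, whose words we represent as lists of positive integers
(the word `x_{i₁} ⋯ x_{i_d}` is the list `[i₁, …, i_d]`).  It is a strict
total order such that the empty word `1` is smallest, which is compatible
with two-sided multiplication (concatenation), and with `x₁ < x₂ < ⋯`. -/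
structure StdTermOrder where
  lt : List ℕ+ → List ℕ+ → Prop
  irrefl : ∀ a, ¬ lt a a
  trans : ∀ a b c, lt a b → lt b c → lt a c
  total : ∀ a b, a ≠ b → lt a b ∨ lt b a
  one_lt : ∀ t, t ≠ [] → lt [] t
  mul_lt : ∀ a b s t, lt s t → lt (a ++ s ++ b) (a ++ t ++ b)
  std : ∀ i j : ℕ+, i < j → lt [i] [j]

/-- The partial order `𝔑`, the intersection of all standard term orders:
`m ≤_𝔑 m'` iff `m ≤ m'` holds for every standard term order on `X*`. -/
def Nle (m m' : List ℕ+) : Prop := ∀ T : StdTermOrder, m = m' ∨ T.lt m m'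

/-- The strict version of `𝔑`. -/
def Nlt (m m' : List ℕ+) : Prop := Nle m m' ∧ m ≠ m'

/-- `m'` covers `m` in the partial order `𝔑`. -/
def NCovers (m m' : List ℕ+) : Prop :=
  Nlt m m' ∧ ∀ k, Nlt m k → ¬ Nlt k m'

/-- The predicate "the word lies in the submonoid `X_n*`", i.e. all its
letters are among `x₁, …, x_n`. -/
def InXn (n : ℕ+) (l : List ℕ+) : Prop := ∀ a ∈ l, a ≤ n

/-- A standard term order on the free monoid `X_n*` on the finite alphabet
`{x₁, …, x_n}`: a relation which, restricted to the words with letters of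
index at most `n`, is a strict total order, smallest on the empty word,
compatible with multiplication, and with `x₁ < ⋯ < x_n`. -/
structure StdTermOrderN (n : ℕ+) where
  lt : List ℕ+ → List ℕ+ → Prop
  irrefl : ∀ a, InXn n a → ¬ lt a a
  trans : ∀ a b c, InXn n a → InXn n b → InXn n c → lt a b → lt b c → lt a c
  total : ∀ a b, InXn n a → InXn n b → a ≠ b → lt a b ∨ lt b a
  one_lt : ∀ t, InXn n t → t ≠ [] → lt [] t
  mul_lt : ∀ a b s t, InXn n a → InXn n b → InXn n s → InXn n t →
    lt s t → lt (a ++ s ++ b) (a ++ t ++ b)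
  std : ∀ i j : ℕ+, i < j → j ≤ n → lt [i] [j]

/-- `𝔑_n`, the intersection of all standard term orders on `X_n*`. -/
def NleN (n : ℕ+) (m m' : List ℕ+) : Prop :=
  ∀ T : StdTermOrderN n, m = m' ∨ T.lt m m'

/-!
A word over `α` is `u₀ x₁ u₁ ⋯ x_k u_k`, where the `x_i` are its letters outside the initial segment
`s` and the blocks `u_i` are words over `s`. Given a term order on the words over `s`, compare two
words first by `x₁ ⋯ x_k` in shortlex order, and then by the block lists `[u₀, …, u_k]`
lexicographically, using the given order on blocks. Multiplying by a letter of `s` only changes the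
first or the last block, and multiplying by another letter adds an empty block, so the resulting
order is again a term order. It extends the given one since a word over `s` is its own only block.
-/

open List

section Shortlex

variable {α : Type*} {r : α → α → Prop} {f : α → α} {u v : List α}

theorem isStrictTotalOrder_shortlex (r : α → α → Prop) [IsStrictTotalOrder α r] :
    IsStrictTotalOrder (List α) (Shortlex r) :=
  haveI : IsStrictTotalOrder (List α) (Lex r) :=
    { isStrictWeakOrder_of_isOrderConnected with }
  { irrefl := fun _ h => asymm h h
    trans := fun _ _ _ h h' => trans_of (Prod.Lex (· < ·) (Lex r)) h h' }

theorem shortlex_modifyHead (hf : ∀ a b, r a b → r (f a) (f b)) (h : Shortlex r u v) :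
    Shortlex r (u.modifyHead f) (v.modifyHead f) := by
  obtain hlt | ⟨heq, hlex⟩ := shortlex_def.1 h
  · exact .of_length_lt (by simpa using hlt)
  · refine .of_lex (by simpa using heq) ?_
    cases hlex with
    | nil => simp at heq
    | rel hab => exact .rel (hf _ _ hab)
    | cons hlex => exact .cons hlex

theorem length_modifyLast (f : α → α) (u : List α) : (u.modifyLast f).length = u.length := by
  induction u using List.reverseRecOn with
  | nil => rfl
  | append_singleton u a _ => simp [modifyLast_concat]

theorem modifyLast_cons_of_ne_nil (f : α → α) (a : α) (hu : u ≠ []) :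
    (a :: u).modifyLast f = a :: u.modifyLast f :=
  modifyLast_append_of_right_ne_nil f [a] u hu

theorem lex_modifyLast (hf : ∀ a b, r a b → r (f a) (f b)) (hlen : u.length = v.length)
    (h : Lex r u v) : Lex r (u.modifyLast f) (v.modifyLast f) := by
  induction h with
  | nil => simp at hlen
  | @rel a u b v hab =>
    rcases eq_or_ne u [] with rfl | hu
    · obtain rfl : v = [] := by simpa [eq_comm] using hlen
      exact .rel (hf a b hab)
    · have hlen : u.length = v.length := by simpa using hlen
      have hv : v ≠ [] := by rwa [ne_eq, ← length_eq_zero_iff, ← hlen, length_eq_zero_iff]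
      rw [modifyLast_cons_of_ne_nil f a hu, modifyLast_cons_of_ne_nil f b hv]
      exact .rel hab
  | @cons a u v h ih =>
    have hlen : u.length = v.length := by simpa using hlen
    have hv : v ≠ [] := by rintro rfl; simp at h
    have hu : u ≠ [] := by rwa [ne_eq, ← length_eq_zero_iff, hlen, length_eq_zero_iff]
    rw [modifyLast_cons_of_ne_nil f a hu, modifyLast_cons_of_ne_nil f a hv]
    exact .cons (ih hlen)

theorem shortlex_modifyLast (hf : ∀ a b, r a b → r (f a) (f b)) (h : Shortlex r u v) :
    Shortlex r (u.modifyLast f) (v.modifyLast f) := by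
  obtain hlt | ⟨heq, hlex⟩ := shortlex_def.1 h
  · exact .of_length_lt (by simpa only [length_modifyLast] using hlt)
  · exact .of_lex (by simpa only [length_modifyLast] using heq) (lex_modifyLast hf heq hlex)

theorem lex_append_right_of_length_eq (hlen : u.length = v.length) (h : Lex r u v) (w : List α) :
    Lex r (u ++ w) (v ++ w) := by
  induction h with
  | nil => simp at hlen
  | rel hab => exact .rel hab
  | cons _ ih => exact .cons (ih (by simpa using hlen))

theorem shortlex_append_right (h : Shortlex r u v) (w : List α) :
    Shortlex r (u ++ w) (v ++ w) := by
  obtain hlt | ⟨heq, hlex⟩ := shortlex_def.1 h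
  · exact .of_length_lt (by simpa using hlt)
  · exact .of_lex (by simpa using heq) (lex_append_right_of_length_eq heq hlex w)

end Shortlex

section Blocks

variable {α : Type*}

/-- The word `u₀ x₁ u₁ ⋯ x_k u_k` with outer letters `[x₁, …, x_k]` and blocks `[u₀, …, u_k]`. The
second clause is meant for an exhausted list of letters, when one block is left. -/
def ofBlocks {s : Set α} : List α → List (List s) → List α
  | a :: as, U :: Us => U.map (↑) ++ a :: ofBlocks as Us
  | _, Us => Us.flatten.map (↑)

theorem ofBlocks_modifyHead_cons {s : Set α} (as : List α) (a : s) {Us : List (List s)}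
    (hUs : Us ≠ []) : ofBlocks as (Us.modifyHead (a :: ·)) = (a : α) :: ofBlocks as Us := by
  obtain ⟨U, Us, rfl⟩ := exists_cons_of_ne_nil hUs
  cases as <;> simp [ofBlocks]

variable (s : Set α) [DecidablePred (· ∈ s)]

/-- The blocks of a word, i.e. the maximal factors with letters in `s`, in order. A word with `k`
letters outside `s` has `k + 1` blocks, some of which may be empty. -/
def blocks : List α → List (List s)
  | [] => [[]]
  | a :: w => if ha : a ∈ s then (blocks w).modifyHead (⟨a, ha⟩ :: ·) else [] :: blocks w

variable {s} {a : α}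

theorem blocks_cons_of_mem (ha : a ∈ s) (w : List α) :
    blocks s (a :: w) = (blocks s w).modifyHead (⟨a, ha⟩ :: ·) :=
  dif_pos ha

theorem blocks_cons_of_notMem (ha : a ∉ s) (w : List α) :
    blocks s (a :: w) = [] :: blocks s w :=
  dif_neg ha

theorem blocks_ne_nil (w : List α) : blocks s w ≠ [] := by
  induction w with
  | nil => simp [blocks]
  | cons a w ih => by_cases ha : a ∈ s <;> simp [blocks, ha, ih]

theorem blocks_map_coe (u : List s) : blocks s (u.map (↑)) = [u] := by
  induction u with
  | nil => rfl
  | cons a u ih => rw [map_cons, blocks_cons_of_mem a.2, ih, modifyHead_cons]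

theorem blocks_concat_of_mem (w : List α) (ha : a ∈ s) :
    blocks s (w ++ [a]) = (blocks s w).modifyLast (· ++ [⟨a, ha⟩]) := by
  induction w with
  | nil => exact blocks_cons_of_mem ha []
  | cons b w ih =>
    obtain ⟨u, us, hw⟩ := exists_cons_of_ne_nil (blocks_ne_nil (s := s) w)
    by_cases hb : b ∈ s
    · rw [cons_append, blocks_cons_of_mem hb, blocks_cons_of_mem hb, ih, hw]
      rcases eq_or_ne us [] with rfl | hus
      · rfl
      · simp only [modifyHead_cons, modifyLast_cons_of_ne_nil _ _ hus]
    · rw [cons_append, blocks_cons_of_notMem hb, blocks_cons_of_notMem hb, ih,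
        modifyLast_cons_of_ne_nil _ _ (blocks_ne_nil w)]

theorem blocks_concat_of_notMem (w : List α) (ha : a ∉ s) :
    blocks s (w ++ [a]) = blocks s w ++ [[]] := by
  induction w with
  | nil => exact blocks_cons_of_notMem ha []
  | cons b w ih =>
    obtain ⟨u, us, hw⟩ := exists_cons_of_ne_nil (blocks_ne_nil (s := s) w)
    by_cases hb : b ∈ s
    · simp [blocks_cons_of_mem hb, ih, hw]
    · simp [blocks_cons_of_notMem hb, ih]

theorem ofBlocks_filter_blocks (w : List α) :
    ofBlocks (w.filter (· ∉ s)) (blocks s w) = w := by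
  induction w with
  | nil => rfl
  | cons a w ih =>
    by_cases ha : a ∈ s
    · rw [blocks_cons_of_mem ha, ofBlocks_modifyHead_cons _ _ (blocks_ne_nil w),
        filter_cons_of_neg (by simp [ha]), ih]
    · rw [blocks_cons_of_notMem ha, filter_cons_of_pos (by simp [ha]), ofBlocks, ih]
      rfl

theorem injective_filter_notMem_blocks :
    Function.Injective fun w : List α => (w.filter (· ∉ s), blocks s w) :=
  Function.LeftInverse.injective (g := fun p : List α × List (List s) => ofBlocks p.1 p.2)
    ofBlocks_filter_blocks

end Blocks

/-- A standard term order, as a strict order, on the words over an arbitrary ordered alphabet. -/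
structure IsStdTermOrder {α : Type*} [LT α] (r : List α → List α → Prop) : Prop
    extends IsStrictTotalOrder (List α) r where
  nil_lt : ∀ w, w ≠ [] → r [] w
  append_lt : ∀ a b u v, r u v → r (a ++ u ++ b) (a ++ v ++ b)
  singleton_lt : ∀ i j, i < j → r [i] [j]

/-- The partial order `𝔑` over an arbitrary ordered alphabet: the intersection of all standard term
orders. -/
def TermLE {α : Type*} [LT α] (u v : List α) : Prop :=
  ∀ r : List α → List α → Prop, IsStdTermOrder r → u = v ∨ r u v

theorem IsStdTermOrder.comap {α β : Type*} [LinearOrder α] [Preorder β]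
    {r : List β → List β → Prop} (hr : IsStdTermOrder r) {f : α → β} (hf : StrictMono f) :
    IsStdTermOrder fun u v : List α => r (u.map f) (v.map f) where
  toIsStrictTotalOrder :=
    haveI := hr.toIsStrictTotalOrder
    hf.injective.list_map.isStrictTotalOrder_onFun r
  nil_lt w hw := hr.nil_lt _ (by simpa using hw)
  append_lt a b u v h := by simpa using hr.append_lt (a.map f) (b.map f) _ _ h
  singleton_lt i j hij := hr.singleton_lt _ _ (hf hij)

section BlockOrder

variable {α : Type*} [LT α] (s : Set α) [DecidablePred (· ∈ s)]

/-- The extension to all words of a relation `r` on the words over `s`: compare the subwords of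
letters outside `s` in shortlex order, and break ties by comparing the lists of blocks. These then
have equal length, so that using the shortlex order for them as well amounts to a lexicographic
comparison. -/
def blockOrder (r : List s → List s → Prop) : List α → List α → Prop :=
  Function.onFun (Prod.Lex (Shortlex (· < ·)) (Shortlex r))
    fun w => (w.filter (· ∉ s), blocks s w)

variable {s} {r : List s → List s → Prop} {u v : List α}

theorem blockOrder_iff :
    blockOrder s r u v ↔ Shortlex (· < ·) (u.filter (· ∉ s)) (v.filter (· ∉ s)) ∨
      u.filter (· ∉ s) = v.filter (· ∉ s) ∧ Shortlex r (blocks s u) (blocks s v) :=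
  Prod.lex_def

theorem blockOrder_map_coe_iff {u v : List s} :
    blockOrder s r (u.map (↑)) (v.map (↑)) ↔ r u v := by
  have hfilter (w : List s) : (w.map (↑)).filter (· ∉ s) = [] :=
    filter_eq_nil_iff.2 (by simp +contextual)
  simp only [blockOrder_iff, hfilter, blocks_map_coe, not_shortlex_nil_right, true_and, false_or,
    shortlex_singleton_iff]

theorem blockOrder_cons (hr : ∀ a u v, r u v → r (a :: u) (a :: v)) (a : α)
    (h : blockOrder s r u v) : blockOrder s r (a :: u) (a :: v) := by
  rw [blockOrder_iff] at h ⊢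
  by_cases ha : a ∈ s
  · simp only [filter_cons, ha, not_true, decide_false, Bool.false_eq_true, if_false,
      blocks_cons_of_mem]
    exact h.imp_right <| And.imp_right <| shortlex_modifyHead (hr _)
  · simp only [filter_cons, ha, not_false_eq_true, decide_true, if_true, blocks_cons_of_notMem]
    exact h.imp (Shortlex.append_left · [a])
      (And.imp (congrArg (a :: ·)) (Shortlex.append_left · [[]]))

theorem blockOrder_concat (hr : ∀ a u v, r u v → r (u ++ [a]) (v ++ [a])) (a : α)
    (h : blockOrder s r u v) : blockOrder s r (u ++ [a]) (v ++ [a]) := by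
  rw [blockOrder_iff] at h ⊢
  simp only [filter_append]
  by_cases ha : a ∈ s
  · have hfilter : [a].filter (· ∉ s) = [] := by simp [ha]
    simp only [hfilter, append_nil, blocks_concat_of_mem _ ha]
    exact h.imp_right <| And.imp_right <| shortlex_modifyLast (hr _)
  · simp only [blocks_concat_of_notMem _ ha]
    exact h.imp (shortlex_append_right · _)
      (And.imp (congrArg (· ++ _)) (shortlex_append_right · _))

theorem blockOrder_nil_of_ne_nil (hr : ∀ w, w ≠ [] → r [] w) {w : List α} (hw : w ≠ []) :
    blockOrder s r [] w := by
  rcases shortlex_nil_or_eq_nil (r := (· < ·)) (w.filter (· ∉ s)) with hlt | hnil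
  · exact blockOrder_iff.2 (.inl hlt)
  · have hmem : ∀ a ∈ w, a ∈ s := by simpa [filter_eq_nil_iff] using hnil
    lift w to List s using hmem
    exact blockOrder_map_coe_iff (u := []).2 (hr w (mt (congrArg _) hw))

end BlockOrder

theorem isStrictTotalOrder_blockOrder {α : Type*} [LinearOrder α] {s : Set α}
    [DecidablePred (· ∈ s)] {r : List s → List s → Prop} [IsStrictTotalOrder (List s) r] :
    IsStrictTotalOrder (List α) (blockOrder s r) :=
  haveI := isStrictTotalOrder_shortlex (α := α) (· < ·)
  haveI := isStrictTotalOrder_shortlex r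
  haveI : IsStrictTotalOrder _ (Prod.Lex (Shortlex (α := α) (· < ·)) (Shortlex r)) := { }
  injective_filter_notMem_blocks.isStrictTotalOrder_onFun _

theorem blockOrder_singleton {α : Type*} [Preorder α] {s : Set α} [DecidablePred (· ∈ s)]
    {r : List s → List s → Prop} (hs : IsLowerSet s) (hr : ∀ i j, i < j → r [i] [j]) {i j : α}
    (hij : i < j) : blockOrder s r [i] [j] := by
  by_cases hj : j ∈ s
  · exact blockOrder_map_coe_iff (u := [⟨i, hs hij.le hj⟩]) (v := [⟨j, hj⟩]).2 (hr _ _ hij)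
  · refine blockOrder_iff.2 (.inl ?_)
    by_cases hi : i ∈ s
    · exact .of_length_lt (by simp [hi, hj])
    · simpa [hi, hj] using hij

theorem isStdTermOrder_blockOrder {α : Type*} [LinearOrder α] {s : Set α}
    [DecidablePred (· ∈ s)] {r : List s → List s → Prop} (hs : IsLowerSet s)
    (hr : IsStdTermOrder r) :
    IsStdTermOrder (blockOrder s r) where
  toIsStrictTotalOrder :=
    haveI := hr.toIsStrictTotalOrder
    isStrictTotalOrder_blockOrder
  nil_lt _ := blockOrder_nil_of_ne_nil hr.nil_lt
  append_lt a b u v h := by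
    have hcons (a : s) (u v : List s) (h : r u v) : r (a :: u) (a :: v) := by
      simpa using hr.append_lt [a] [] u v h
    have hconcat (a : s) (u v : List s) : r u v → r (u ++ [a]) (v ++ [a]) :=
      hr.append_lt [] [a] u v
    have hleft : blockOrder s r (a ++ u) (a ++ v) := by
      induction a with
      | nil => exact h
      | cons x a ih => exact blockOrder_cons hcons x ih
    induction b using List.reverseRecOn with
    | nil => simpa using hleft
    | append_singleton b x ih => simpa using blockOrder_concat hconcat x ih
  singleton_lt _ _ := blockOrder_singleton hs hr.singleton_lt

theorem stmt0_general {α : Type*} [LinearOrder α] {s : Set α} (hs : IsLowerSet s) :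
    (∀ r : List s → List s → Prop, IsStdTermOrder r →
      ∃ r' : List α → List α → Prop, IsStdTermOrder r' ∧
        ∀ u v : List s, r u v ↔ r' (u.map (↑)) (v.map (↑))) ∧
    (∀ u v : List s, TermLE u v ↔ TermLE (u.map (↑) : List α) (v.map (↑))) := by
  classical
  refine ⟨fun r hr => ⟨blockOrder s r, isStdTermOrder_blockOrder hs hr,
    fun _ _ => blockOrder_map_coe_iff.symm⟩, fun u v => ⟨fun h r' hr' => ?_, fun h r hr => ?_⟩⟩
  · exact (h _ (hr'.comap (Subtype.strictMono_coe s))).imp_left (congrArg _)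
  · exact (h _ (isStdTermOrder_blockOrder hs hr)).imp (fun e => Subtype.coe_injective.list_map e)
      blockOrder_map_coe_iff.1

section Bundled

variable {n : ℕ+}

theorem inXn_map_coe (u : List (Set.Iic n)) : InXn n (u.map (↑)) := by
  simp +contextual [InXn]

/-- A standard term order on the words over `ℕ+`, bundled as a standard term order on `X*`. -/
def IsStdTermOrder.toStdTermOrder {r : List ℕ+ → List ℕ+ → Prop} (hr : IsStdTermOrder r) :
    StdTermOrder where
  lt := r
  irrefl := hr.irrefl
  trans := hr.trans
  total a b hab := by
    by_contra! hne
    exact hab (hr.trichotomous a b hne.1 hne.2)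
  one_lt := hr.nil_lt
  mul_lt := hr.append_lt
  std := hr.singleton_lt

theorem StdTermOrderN.isStdTermOrder (T : StdTermOrderN n) :
    IsStdTermOrder fun u v : List (Set.Iic n) => T.lt (u.map (↑)) (v.map (↑)) where
  irrefl u := T.irrefl _ (inXn_map_coe u)
  trans u v w := T.trans _ _ _ (inXn_map_coe u) (inXn_map_coe v) (inXn_map_coe w)
  trichotomous u v huv hvu := by
    by_contra hne
    have hne : u.map (↑) ≠ (v.map (↑) : List ℕ+) := Subtype.coe_injective.list_map.ne hne
    exact (T.total _ _ (inXn_map_coe u) (inXn_map_coe v) hne).elim huv hvu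
  nil_lt u hu := T.one_lt _ (inXn_map_coe u) (by rwa [ne_eq, map_eq_nil_iff])
  append_lt a b u v h := by
    simpa only [map_append] using T.mul_lt _ _ _ _ (inXn_map_coe a) (inXn_map_coe b)
      (inXn_map_coe u) (inXn_map_coe v) h
  singleton_lt i j hij := T.std i j hij j.2

/-- The restriction of a standard term order on `X*` to `X_n*`. -/
def StdTermOrder.restrict (T : StdTermOrder) (n : ℕ+) : StdTermOrderN n where
  lt := T.lt
  irrefl a _ := T.irrefl a
  trans a b c _ _ _ := T.trans a b c
  total a b _ _ := T.total a b
  one_lt t _ := T.one_lt t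
  mul_lt a b u v _ _ _ _ := T.mul_lt a b u v
  std i j hij _ := T.std i j hij

theorem StdTermOrderN.exists_extension (T : StdTermOrderN n) :
    ∃ T' : StdTermOrder, ∀ m m', InXn n m → InXn n m' → (T.lt m m' ↔ T'.lt m m') := by
  obtain ⟨r, hr, hext⟩ := (stmt0_general (isLowerSet_Iic n)).1 _ T.isStdTermOrder
  refine ⟨hr.toStdTermOrder, fun m m' hm hm' => ?_⟩
  lift m to List (Set.Iic n) using hm
  lift m' to List (Set.Iic n) using hm'
  exact hext m m'

theorem nleN_iff_nle {m m' : List ℕ+} (hm : InXn n m) (hm' : InXn n m') :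
    NleN n m m' ↔ Nle m m' := by
  refine ⟨fun h T => h (T.restrict n), fun h T => ?_⟩
  lift m to List (Set.Iic n) using hm
  lift m' to List (Set.Iic n) using hm'
  have hle : TermLE m m' :=
    ((stmt0_general (isLowerSet_Iic n)).2 m m').2 fun _ hr => h hr.toStdTermOrder
  exact (hle _ T.isStdTermOrder).imp_left (congrArg _)

end Bundled

/-- Every standard term order on `X_n*` extends to a standard term order on
`X*`; consequently `𝔑_n` is exactly the restriction of `𝔑` to `X_n*`. -/
theorem stmt0 (n : ℕ+) :
    (∀ Tn : StdTermOrderN n, ∃ T : StdTermOrder,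
      ∀ m m', InXn n m → InXn n m' → (Tn.lt m m' ↔ T.lt m m')) ∧
    (∀ m m', InXn n m → InXn n m' → (NleN n m m' ↔ Nle m m')) :=
  ⟨fun Tn => Tn.exists_extension, fun _ _ => nleN_iff_nle⟩
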